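/- Let 0 ≤ α ≤ ω₁ and let {X_β : β ∈ A} be a family of topological spaces such that B_α(X_β, ℝ) is a Baire space for every β ∈ A. Then the product space ∏_{β∈A} B_α(X_β, ℝ) is a Baire space. -/

import Mathlib

open Set Filter Topology Ordinal TopologicalSpace

/-- A map `φ : K → M` is *almost open* if the image of every nonempty open set
has nonempty interior. -/
def AlmostOpenMap {K M : Type*} [TopologicalSpace K] [TopologicalSpace M] (φ : K → M) : Prop :=
  ∀ V : Set K, IsOpen V → V.Nonempty → (interior (φ '' V)).Nonempty

/-- The Baire class `B_α(X,Y)`: `B_0(X,Y)` is the set of continuous functions, and for `α > 0`,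
`B_α(X,Y)` is the set of pointwise limits of sequences from `C(X,Y) ∪ ⋃_{β<α} B_β(X,Y)`. -/
noncomputable def BaireClass (X Y : Type*) [TopologicalSpace X] [TopologicalSpace Y]
    (α : Ordinal.{0}) : Set (X → Y) :=
  if α = 0 then {f | Continuous f}
  else {f | ∃ g : ℕ → X → Y,
    (∀ n, Continuous (g n) ∨ ∃ β, ∃ _ : β < α, g n ∈ BaireClass X Y β) ∧
    ∀ x, Filter.Tendsto (fun n => g n x) Filter.atTop (nhds (f x))}
termination_by α

/-- `B_α(X,Y)` for `0 ≤ α ≤ ω₁`, where `B_{ω₁}(X,Y) = ⋃_{β<ω₁} B_β(X,Y)`. -/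
noncomputable def BaireFun (X Y : Type*) [TopologicalSpace X] [TopologicalSpace Y]
    (α : Ordinal.{0}) : Set (X → Y) :=
  if α = ω_ 1 then ⋃ β ∈ Set.Iio (ω_ 1 : Ordinal.{0}), BaireClass X Y β
  else BaireClass X Y α

lemma dep_rec {S : Type*} (P : ℕ → S → Prop) (R : ℕ → S → S → Prop) (s0 : S) (h0 : P 0 s0)
    (step : ∀ k s, P k s → ∃ s', P (k+1) s' ∧ R k s s') :
    ∃ s : ℕ → S, s 0 = s0 ∧ (∀ k, P k (s k)) ∧ ∀ k, R k (s k) (s (k+1)) := by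
  choose nx hnx using step
  let t : (k : ℕ) → {s // P k s} := fun k =>
    Nat.rec (motive := fun k => {s // P k s}) ⟨s0, h0⟩
      (fun k s => ⟨nx k s.1 s.2, (hnx k s.1 s.2).1⟩) k
  exact ⟨fun k => (t k).1, rfl, fun k => (t k).2, fun k => (hnx k (t k).1 (t k).2).2⟩

lemma box_of_open {X : Type*} {D : Set (X → ℝ)} (hD : IsOpen D) {g0 : X → ℝ} (hg : g0 ∈ D) :
    ∃ T : Finset X, ∃ δ : ℝ, 0 < δ ∧ ∀ g : X → ℝ, (∀ x ∈ T, |g x - g0 x| < δ) → g ∈ D := by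
  classical
  rw [isOpen_pi_iff] at hD
  obtain ⟨T, u, hu, hsub⟩ := hD g0 hg
  have : ∀ x ∈ T, ∃ δ : ℝ, 0 < δ ∧ Metric.ball (g0 x) δ ⊆ u x := fun x hx =>
    Metric.isOpen_iff.1 (hu x hx).1 _ (hu x hx).2
  have key : ∃ δ : ℝ, 0 < δ ∧ ∀ x ∈ T, Metric.ball (g0 x) δ ⊆ u x := by
    clear hsub
    induction T using Finset.induction_on with
    | empty => exact ⟨1, one_pos, by simp⟩
    | insert a s ha ih =>
      obtain ⟨d, hd, hd'⟩ := ih (fun x hx => hu x (Finset.mem_insert_of_mem hx))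
        (fun x hx => this x (Finset.mem_insert_of_mem hx))
      obtain ⟨e, he, he'⟩ := this a (Finset.mem_insert_self _ _)
      refine ⟨min d e, lt_min hd he, fun x hx => ?_⟩
      rcases Finset.mem_insert.1 hx with rfl | hx
      · exact (Metric.ball_subset_ball (min_le_right _ _)).trans he'
      · exact (Metric.ball_subset_ball (min_le_left _ _)).trans (hd' x hx)
  obtain ⟨δ, hδ, h⟩ := key
  refine ⟨T, δ, hδ, fun g hg => hsub ?_⟩
  intro x hx
  exact h x hx (by simpa [Real.dist_eq] using hg x hx)

lemma isOpen_box {X : Type*} (K : Finset X) (v : X → ℝ) (δ : ℝ) :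
    IsOpen {g : X → ℝ | ∀ x ∈ K, |g x - v x| < δ} := by
  have : {g : X → ℝ | ∀ x ∈ K, |g x - v x| < δ} = ⋂ x ∈ K, {g | |g x - v x| < δ} := by
    ext; simp
  rw [this]
  refine isOpen_biInter_finset fun x _ => ?_
  exact isOpen_lt (by fun_prop) continuous_const

lemma lemA_fin {X : Type*} (D : Set (X → ℝ)) (hD : IsOpen D) (hd : Dense D) (K : Finset X)
    (ε : ℝ) (hε : 0 < ε) (V : Finset (X → ℝ)) :
    ∃ Δ : Finset X, Disjoint K Δ ∧ ∃ w : X → ℝ, ∃ δ : ℝ, 0 < δ ∧ ∀ v ∈ V,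
      ∃ v' : X → ℝ, (∀ x ∈ K, |v' x - v x| < ε) ∧
        ∀ g : X → ℝ, (∀ x ∈ K, |g x - v' x| < δ) → (∀ x ∈ Δ, |g x - w x| < δ) → g ∈ D := by
  classical
  induction V using Finset.induction_on with
  | empty => exact ⟨∅, by simp, 0, 1, one_pos, by simp⟩
  | insert v0 V hv ih =>
    obtain ⟨Δ, hdis, w, δ, hδ, H⟩ := ih
    obtain ⟨g0, hg0, hg0D⟩ := hd.inter_open_nonempty
      ({g : X → ℝ | ∀ x ∈ K, |g x - v0 x| < ε} ∩ {g : X → ℝ | ∀ x ∈ Δ, |g x - w x| < δ / 2})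
      ((isOpen_box K v0 ε).inter (isOpen_box Δ w (δ/2)))
      ⟨fun x => if x ∈ K then v0 x else w x, by
        constructor
        · intro x hx; simp [hx, hε]
        · intro x hx
          have : x ∉ K := fun h => (Finset.disjoint_left.1 hdis h hx)
          simp [this, hδ]⟩
    obtain ⟨T, d, hd0, hT⟩ := box_of_open hD hg0D
    refine ⟨Δ ∪ (T \ K), ?_, g0, min (δ/2) d, lt_min (by linarith) hd0, ?_⟩
    · rw [Finset.disjoint_union_right]
      exact ⟨hdis, Finset.disjoint_sdiff⟩
    · intro v hvm
      rcases Finset.mem_insert.1 hvm with rfl | hvm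
      · refine ⟨g0, hg0.1, fun g h1 h2 => hT g fun x hx => ?_⟩
        by_cases hxK : x ∈ K
        · exact (h1 x hxK).trans_le (min_le_right _ _)
        · exact (h2 x (by simp [hx, hxK])).trans_le (min_le_right _ _)
      · obtain ⟨v', h1, h2⟩ := H v hvm
        refine ⟨v', h1, fun g h3 h4 => h2 g (fun x hx => ?_) (fun x hx => ?_)⟩
        · have := (h3 x hx).trans_le (min_le_left _ _)
          linarith
        · have a := (h4 x (by simp [hx])).trans_le (min_le_left _ _)
          have b := hg0.2 x hx
          have := abs_sub_le (g x) (g0 x) (w x)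
          linarith

lemma lemA {X : Type*} (D : Set (X → ℝ)) (hD : IsOpen D) (hd : Dense D) (K : Finset X)
    (M ε : ℝ) (hε : 0 < ε) :
    ∃ Δ : Finset X, Disjoint K Δ ∧ ∃ w : X → ℝ, ∃ δ : ℝ, 0 < δ ∧ ∀ v : X → ℝ,
      (∀ x ∈ K, |v x| ≤ M) →
      ∃ v' : X → ℝ, (∀ x ∈ K, |v' x - v x| ≤ ε) ∧
        ∀ g : X → ℝ, (∀ x ∈ K, |g x - v' x| < δ) → (∀ x ∈ Δ, |g x - w x| < δ) → g ∈ D := by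
  classical
  have hc : IsCompact (Set.pi Set.univ (fun _ : K => Set.Icc (-M) M)) :=
    isCompact_univ_pi fun _ => isCompact_Icc
  obtain ⟨t, -, htf, ht⟩ := hc.finite_cover_balls (half_pos hε)
  let ext : (K → ℝ) → (X → ℝ) := fun u x => if hx : x ∈ K then u ⟨x, hx⟩ else 0
  obtain ⟨Δ, hdis, w, δ, hδ, H⟩ := lemA_fin D hD hd K (ε/2) (half_pos hε) (htf.toFinset.image ext)
  refine ⟨Δ, hdis, w, δ, hδ, fun v hv => ?_⟩
  have hm : (fun x : K => v x) ∈ Set.pi Set.univ (fun _ : K => Set.Icc (-M) M) := by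
    intro x _
    exact abs_le.1 (hv x x.2)
  have := ht hm
  simp only [Set.mem_iUnion] at this
  obtain ⟨u, hu, hdist⟩ := this
  obtain ⟨v', h1, h2⟩ := H (ext u) (Finset.mem_image_of_mem _ (by simpa using hu))
  refine ⟨v', fun x hx => ?_, h2⟩
  have a := h1 x hx
  have b : |v x - u ⟨x, hx⟩| < ε / 2 := by
    rw [Metric.mem_ball] at hdist
    have := (dist_le_pi_dist (fun x : K => v x) u ⟨x, hx⟩).trans_lt hdist
    simpa [Real.dist_eq] using this
  simp only [ext, hx, dif_pos] at a
  have := abs_sub_le (v' x) (u ⟨x, hx⟩) (v x)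
  rw [abs_sub_comm (v x)] at b
  linarith

/-- finite interpolation by continuous functions -/
def Interp (X : Type*) [TopologicalSpace X] : Prop :=
  ∀ (K : Finset X) (v : X → ℝ), ∃ p : X → ℝ, Continuous p ∧ ∀ x ∈ K, p x = v x

/-- stability under continuous substitution -/
def Stab {X : Type*} [TopologicalSpace X] (F : Set (X → ℝ)) : Prop :=
  F.Nonempty ∧ ∀ f ∈ F, ∀ H : ℝ × X → ℝ, Continuous H → (fun x => H (f x, x)) ∈ F

/-- the combinatorial condition -/
def StarC {X : Type*} (F : Set (X → ℝ)) : Prop :=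
  ∀ Δ : ℕ → Finset X, (∀ i j, i ≠ j → Disjoint (Δ i) (Δ j)) →
    ∃ n : ℕ → ℕ, StrictMono n ∧ ∃ h ∈ F, ∀ k : ℕ, ∀ x ∈ Δ (n k), (k : ℝ) ≤ h x

lemma Stab.cont {X : Type*} [TopologicalSpace X] {F : Set (X → ℝ)} (hF : Stab F)
    {p : X → ℝ} (hp : Continuous p) : p ∈ F := by
  obtain ⟨f, hf⟩ := hF.1
  exact hF.2 f hf (fun z => p z.2) (hp.comp continuous_snd)

lemma Interp.bdd {X : Type*} [TopologicalSpace X] (hX : Interp X) (K : Finset X) (v : X → ℝ)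
    (c : ℝ) (hc : 0 ≤ c) (hv : ∀ x ∈ K, |v x| ≤ c) :
    ∃ p : X → ℝ, Continuous p ∧ (∀ x, |p x| ≤ c) ∧ ∀ x ∈ K, p x = v x := by
  obtain ⟨p, hp, hpv⟩ := hX K v
  refine ⟨fun x => max (-c) (min c (p x)), by fun_prop, fun x => ?_, fun x hx => ?_⟩
  · rw [abs_le]
    exact ⟨le_max_left _ _, max_le (by linarith) (min_le_left _ _)⟩
  · have := abs_le.1 (hv x hx)
    simp only [hpv x hx]
    rw [min_eq_right this.2, max_eq_right this.1]

lemma interp_of_t35 (X : Type*) [TopologicalSpace X] [T35Space X] : Interp X := by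
  classical
  intro K v
  have : ∀ x ∈ K, ∃ f : X → ℝ, Continuous f ∧ ∀ y ∈ K, f y = if y = x then 1 else 0 := by
    intro x hx
    obtain ⟨f, hf, h0, h1⟩ := CompletelyRegularSpace.completely_regular x
      ((K.erase x : Finset X) : Set X) (Finset.finite_toSet _).isClosed (by simp)
    refine ⟨fun y => 1 - (f y : ℝ), by fun_prop, fun y hy => ?_⟩
    by_cases hyx : y = x
    · subst hyx; simp [h0]
    · have := h1 (show y ∈ ((K.erase x : Finset X) : Set X) by simp [hy, hyx])
      simp [hyx, this]
  choose! f hf hf' using this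
  refine ⟨fun y => ∑ x ∈ K, v x * f x y, continuous_finsetSum _ fun x hx =>
    continuous_const.mul (hf x hx), fun y hy => ?_⟩
  show ∑ x ∈ K, v x * f x y = v y
  rw [Finset.sum_congr rfl (fun x hx => by rw [hf' x hx y hy])]
  simp [hy]

lemma interp_sigma {A : Type*} (X : A → Type*) [∀ b, TopologicalSpace (X b)]
    (h : ∀ b, Interp (X b)) : Interp (Σ b, X b) := by
  classical
  intro K v
  have := fun b => h b (K.preimage (Sigma.mk b) sigma_mk_injective.injOn) (fun x => v ⟨b, x⟩)
  choose p hp hpv using this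
  refine ⟨fun z => p z.1 z.2, continuous_sigma fun b => hp b, ?_⟩
  rintro ⟨b, x⟩ hx
  exact hpv b x (by simpa using hx)

lemma dense_of_stab {X : Type*} [TopologicalSpace X] (hX : Interp X) {F : Set (X → ℝ)}
    (hF : Stab F) {D : Set (X → ℝ)} (hd : Dense ((Subtype.val : F → (X → ℝ)) ⁻¹' D)) : Dense D := by
  rw [dense_iff_inter_open]
  rintro V hV ⟨g, hg⟩
  obtain ⟨T, δ, hδ, H⟩ := box_of_open hV hg
  obtain ⟨p, hp, hpT⟩ := hX T g
  obtain ⟨q, hq1, hq2⟩ := hd.inter_open_nonempty ((Subtype.val : F → (X → ℝ)) ⁻¹' V)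
    (hV.preimage continuous_subtype_val)
    ⟨⟨p, hF.cont hp⟩, H p fun x hx => by simp [hpT x hx, hδ]⟩
  exact ⟨q, hq1, hq2⟩

lemma star_of_baire {X : Type*} [TopologicalSpace X] (hX : Interp X) (F : Set (X → ℝ))
    (hF : Stab F) [hB : BaireSpace F] : StarC F := by
  classical
  intro Δ hΔ
  let U : ℕ → Set F := fun m => {f | ∃ n ≥ m, ∀ x ∈ Δ n, (m : ℝ) < f.1 x}
  have hUo : ∀ m, IsOpen (U m) := by
    intro m
    have : U m = ⋃ n, ⋃ (_ : n ≥ m), ⋂ x ∈ Δ n, {f : F | (m : ℝ) < f.1 x} := by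
      ext; simp [U]
    rw [this]
    refine isOpen_iUnion fun n => isOpen_iUnion fun _ => isOpen_biInter_finset fun x _ => ?_
    exact isOpen_lt continuous_const ((continuous_apply x).comp continuous_subtype_val)
  have hfin : ∀ K : Finset X, ∃ N, ∀ n ≥ N, Disjoint K (Δ n) := by
    intro K
    induction K using Finset.induction_on with
    | empty => simp
    | insert a K ha ih =>
      obtain ⟨N, hN⟩ := ih
      by_cases h : ∃ j, a ∈ Δ j
      · obtain ⟨j, hj⟩ := h
        refine ⟨max N (j+1), fun n hn => ?_⟩
        rw [Finset.disjoint_insert_left]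
        refine ⟨fun h' => ?_, hN n (by omega)⟩
        exact Finset.disjoint_left.1 (hΔ j n (by omega)) hj h'
      · push Not at h
        exact ⟨N, fun n hn => by rw [Finset.disjoint_insert_left]; exact ⟨h n, hN n hn⟩⟩
  have hUd : ∀ m, Dense (U m) := by
    intro m
    rw [dense_iff_inter_open]
    rintro V hV ⟨g, hg⟩
    obtain ⟨V', hV', rfl⟩ := isOpen_induced_iff.1 hV
    obtain ⟨T, δ, hδ, H⟩ := box_of_open hV' hg
    obtain ⟨N, hN⟩ := hfin T
    obtain ⟨p, hp, hpT⟩ := hX (T ∪ Δ (max N m)) (fun x => if x ∈ T then g.1 x else m + 1)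
    refine ⟨⟨p, hF.cont hp⟩, H p fun x hx => ?_, max N m, le_max_right _ _, fun x hx => ?_⟩
    · rw [hpT x (by simp [hx])]; simp [hx, hδ]
    · have : x ∉ T := fun h => Finset.disjoint_left.1 (hN _ (le_max_left N m)) h hx
      show (m : ℝ) < p x
      rw [hpT x (by simp [hx])]; simp [this]
  have hdense := hB.baire_property U hUo hUd
  obtain ⟨f0, hf0⟩ := hF.1
  haveI : Nonempty F := ⟨⟨f0, hf0⟩⟩
  obtain ⟨f, hf⟩ := hdense.nonempty
  rw [Set.mem_iInter] at hf
  obtain ⟨φ, hφ, h⟩ := Filter.extraction_forall_of_frequently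
    (P := fun m n => ∀ x ∈ Δ n, (m : ℝ) ≤ f.1 x) (fun m => by
      rw [Filter.frequently_atTop]
      intro a
      obtain ⟨n, hn, hx⟩ := hf (max m a)
      refine ⟨n, by omega, fun x hxn => ?_⟩
      have := hx x hxn
      have h2 : (m : ℝ) ≤ ((max m a : ℕ) : ℝ) := by exact_mod_cast le_max_left m a
      linarith)
  exact ⟨φ, hφ, f.1, f.2, h⟩

lemma star_sigma {A : Type*} (X : A → Type*) [∀ b, TopologicalSpace (X b)]
    (F : ∀ b, Set (X b → ℝ)) (hS : ∀ b, Stab (F b)) (hF : ∀ b, StarC (F b)) :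
    StarC {f : (Σ b, X b) → ℝ | ∀ b, (fun x => f ⟨b, x⟩) ∈ F b} := by
  classical
  intro Δ hΔ
  rcases isEmpty_or_nonempty A with hA | hA
  · refine ⟨id, strictMono_id, fun _ => 0, fun b => (hA.false b).elim, ?_⟩
    rintro k ⟨b, x⟩
    exact (hA.false b).elim
  let Δ' : ∀ b, ℕ → Finset (X b) := fun b n =>
    (Δ n).preimage (Sigma.mk b) sigma_mk_injective.injOn
  have hΔ' : ∀ b i j, i ≠ j → Disjoint (Δ' b i) (Δ' b j) := by
    intro b i j hij
    rw [Finset.disjoint_left]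
    intro x hx hx'
    simp only [Δ', Finset.mem_preimage] at hx hx'
    exact Finset.disjoint_left.1 (hΔ i j hij) hx hx'
  have hcount : (⋃ n, ((Sigma.fst '' (Δ n : Set (Σ b, X b))) : Set A)).Countable :=
    Set.countable_iUnion fun n => ((Δ n).finite_toSet.image _).countable
  obtain ⟨e, he⟩ := Set.countable_iff_exists_subset_range.1 hcount
  obtain ⟨N, hN0, hN, hR⟩ := dep_rec (S := ℕ → ℕ) (fun _ n => StrictMono n)
    (fun i n n' => (∃ m : ℕ → ℕ, StrictMono m ∧ n' = n ∘ m) ∧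
      ∃ h ∈ F (e i), ∀ k : ℕ, ∀ x ∈ Δ' (e i) (n' k), (k : ℝ) ≤ h x) id strictMono_id (by
      intro i n hn
      obtain ⟨m, hm, h, hh, H⟩ := hF (e i) (fun k => Δ' (e i) (n k))
        (fun a b hab => hΔ' _ _ _ (hn.injective.ne hab))
      exact ⟨n ∘ m, hn.comp hm, ⟨m, hm, rfl⟩, h, hh, H⟩)
  choose hm h hhF hh using hR
  choose m hm hNm using hm
  have hsub : ∀ i j k, ∃ k' ≥ k, N (i + j) k = N i k' := by
    intro i j
    induction j with
    | zero => exact fun k => ⟨k, le_rfl, rfl⟩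
    | succ j ih =>
      intro k
      obtain ⟨k', hk', h'⟩ := ih (m (i+j) k)
      refine ⟨k', le_trans ((hm (i+j)).le_apply) hk', ?_⟩
      rw [← h', ← add_assoc, hNm (i+j)]
      rfl
  let d : ℕ → ℕ := fun k => N (k+1) k
  have hd : StrictMono d := by
    refine strictMono_nat_of_lt_succ fun k => ?_
    obtain ⟨k', hk', h'⟩ := hsub (k+1) 1 (k+1)
    show N (k+1) k < N (k+1+1) (k+1)
    rw [h']
    exact hN (k+1) (by omega)
  have key : ∀ b, ∃ f ∈ F b, ∀ k : ℕ, ∀ x ∈ Δ' b (d k), (k : ℝ) ≤ f x := by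
    intro b
    by_cases hb : b ∈ Set.range e
    · obtain ⟨i, rfl⟩ := hb
      have hC : ∃ C : ℝ, 0 ≤ C ∧ ∀ k < i, ∀ x ∈ Δ' (e i) (d k), (k : ℝ) ≤ h i x + C := by
        let S : Finset (X (e i)) := (Finset.range i).biUnion fun k => Δ' (e i) (d k)
        refine ⟨i + ∑ x ∈ S, |h i x|, by positivity, fun k hk x hx => ?_⟩
        have h1 : |h i x| ≤ ∑ x ∈ S, |h i x| :=
          Finset.single_le_sum (f := fun x => |h i x|) (fun _ _ => abs_nonneg _)
            (Finset.mem_biUnion.2 ⟨k, Finset.mem_range.2 hk, hx⟩)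
        have h2 : (k : ℝ) ≤ i := by exact_mod_cast hk.le
        have := neg_abs_le (h i x)
        linarith
      obtain ⟨C, hC0, hC⟩ := hC
      refine ⟨fun x => h i x + C, (hS (e i)).2 (h i) (hhF i) (fun z => z.1 + C) (by fun_prop), ?_⟩
      intro k x hx
      by_cases hk : k < i
      · exact hC k hk x hx
      · obtain ⟨k', hk', h'⟩ := hsub (i+1) (k - i) k
        have e1 : d k = N (i+1) k' := by
          rw [← h']; show N (k+1) k = _; congr 1; omega
        rw [e1] at hx
        have := hh i k' x hx
        have h2 : (k : ℝ) ≤ k' := by exact_mod_cast hk'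
        linarith
    · obtain ⟨f, hf⟩ := (hS b).1
      refine ⟨f, hf, fun k x hx => ?_⟩
      refine (hb (he ?_)).elim
      simp only [Set.mem_iUnion]
      exact ⟨d k, ⟨b, x⟩, by simpa [Δ'] using hx, rfl⟩
  choose f hf hk using key
  refine ⟨d, hd, fun z => f z.1 z.2, fun b => hf b, ?_⟩
  rintro k ⟨b, x⟩ hx
  exact hk b k x (by simpa [Δ'] using hx)

lemma stab_sigma {A : Type*} (X : A → Type*) [∀ b, TopologicalSpace (X b)]
    (F : ∀ b, Set (X b → ℝ)) (hS : ∀ b, Stab (F b)) :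
    Stab {f : (Σ b, X b) → ℝ | ∀ b, (fun x => f ⟨b, x⟩) ∈ F b} := by
  refine ⟨?_, ?_⟩
  · choose f hf using fun b => (hS b).1
    exact ⟨fun z => f z.1 z.2, hf⟩
  · intro f hf H hH b
    exact (hS b).2 _ (hf b) (fun z => H (z.1, ⟨b, z.2⟩))
      (hH.comp (continuous_fst.prodMk (continuous_sigmaMk.comp continuous_snd)))

lemma baireClass_cont {X : Type*} [TopologicalSpace X] (α : Ordinal.{0}) {p : X → ℝ}
    (hp : Continuous p) : p ∈ BaireClass X ℝ α := by
  rw [BaireClass]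
  split_ifs
  · exact hp
  · exact ⟨fun _ => p, fun _ => Or.inl hp, fun x => tendsto_const_nhds⟩

lemma baireClass_sub {X : Type*} [TopologicalSpace X] (H : ℝ × X → ℝ) (hH : Continuous H)
    (α : Ordinal.{0}) : ∀ f ∈ BaireClass X ℝ α, (fun x => H (f x, x)) ∈ BaireClass X ℝ α := by
  induction α using WellFoundedLT.induction with
  | ind α ih =>
    intro f hf
    rw [BaireClass] at hf ⊢
    split_ifs at hf ⊢ with h0
    · have hf : Continuous f := hf
      exact hH.comp (hf.prodMk continuous_id)
    · obtain ⟨g, hg, hl⟩ := hf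
      refine ⟨fun n x => H (g n x, x), fun n => ?_, fun x => ?_⟩
      · rcases hg n with h | ⟨β, hβ, h⟩
        · exact Or.inl (hH.comp (h.prodMk continuous_id))
        · exact Or.inr ⟨β, hβ, ih β hβ _ h⟩
      · exact (hH.tendsto (f x, x)).comp ((hl x).prodMk_nhds tendsto_const_nhds)

lemma stab_baireFun (X : Type*) [TopologicalSpace X] (α : Ordinal.{0}) :
    Stab (BaireFun X ℝ α) := by
  unfold BaireFun
  split_ifs with h
  · refine ⟨⟨fun _ => 0, ?_⟩, ?_⟩
    · simp only [Set.mem_iUnion]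
      exact ⟨0, Ordinal.omega_pos 1, baireClass_cont 0 continuous_const⟩
    · intro f hf H hH
      simp only [Set.mem_iUnion] at hf ⊢
      obtain ⟨β, hβ, hf⟩ := hf
      exact ⟨β, hβ, baireClass_sub H hH β f hf⟩
  · exact ⟨⟨fun _ => 0, baireClass_cont α continuous_const⟩, fun f hf H hH =>
      baireClass_sub H hH α f hf⟩

lemma exists_stages {X : Type*} (D : ℕ → Set (X → ℝ)) (hD : ∀ n, IsOpen (D n))
    (hd : ∀ n, Dense (D n)) (K0 : Finset X) (M0 ε0 : ℝ) (hM0 : 0 ≤ M0) (hε0 : 0 < ε0) :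
    ∃ (K : ℕ → Finset X) (M ε : ℕ → ℝ) (Δ : ℕ → Finset X) (w : ℕ → X → ℝ) (δ c : ℕ → ℝ),
      K 0 = K0 ∧ M 0 = M0 ∧ ε 0 = ε0 ∧ (∀ n, 0 ≤ M n) ∧ (∀ n, 0 < ε n) ∧ (∀ n, 0 < δ n) ∧
      (∀ n, 0 ≤ c n) ∧ (∀ n, K n ⊆ K (n+1)) ∧ (∀ n, Δ n ⊆ K (n+1)) ∧
      (∀ n, ∀ x ∈ K (n+1), x ∈ K n ∨ x ∈ Δ n) ∧
      (∀ n, Disjoint (K n) (Δ n)) ∧ (∀ n, M (n+1) = 2 * M n + 2 + c n) ∧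
      (∀ n, ∀ x ∈ Δ n, |w n x| ≤ c n) ∧ (∀ n, ε (n+1) ≤ ε n / 2) ∧ (∀ n, ε (n+1) ≤ δ n / 4) ∧
      (∀ n, ∀ v : X → ℝ, (∀ x ∈ K n, |v x| ≤ M n) →
        ∃ v' : X → ℝ, (∀ x ∈ K n, |v' x - v x| ≤ ε n) ∧
        ∀ g : X → ℝ, (∀ x ∈ K n, |g x - v' x| < δ n) → (∀ x ∈ Δ n, |g x - w n x| < δ n) →
          g ∈ D n) := by
  classical
  obtain ⟨s, h0, hP, hR⟩ := dep_rec (S := Finset X × ℝ × ℝ) (fun _ s => 0 ≤ s.2.1 ∧ 0 < s.2.2)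
    (fun n s s' => ∃ (Δ : Finset X) (w : X → ℝ) (δ c : ℝ), 0 < δ ∧ 0 ≤ c ∧ s'.1 = s.1 ∪ Δ ∧
      Disjoint s.1 Δ ∧ s'.2.1 = 2 * s.2.1 + 2 + c ∧ (∀ x ∈ Δ, |w x| ≤ c) ∧
      s'.2.2 ≤ s.2.2 / 2 ∧ s'.2.2 ≤ δ / 4 ∧
      (∀ v : X → ℝ, (∀ x ∈ s.1, |v x| ≤ s.2.1) →
        ∃ v' : X → ℝ, (∀ x ∈ s.1, |v' x - v x| ≤ s.2.2) ∧
        ∀ g : X → ℝ, (∀ x ∈ s.1, |g x - v' x| < δ) → (∀ x ∈ Δ, |g x - w x| < δ) →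
          g ∈ D n)) (K0, M0, ε0) ⟨hM0, hε0⟩ (by
      rintro n ⟨K, M, ε⟩ ⟨hM, hε⟩
      simp only at hM hε
      obtain ⟨Δ, hdis, w, δ, hδ, H⟩ := lemA (D n) (hD n) (hd n) K M ε hε
      have hc : 0 ≤ ∑ x ∈ Δ, |w x| := Finset.sum_nonneg fun _ _ => abs_nonneg _
      refine ⟨(K ∪ Δ, 2 * M + 2 + ∑ x ∈ Δ, |w x|, min (ε / 2) (δ / 4)),
        ⟨by simp only; linarith, lt_min (by linarith) (by linarith)⟩,
        Δ, w, δ, ∑ x ∈ Δ, |w x|, hδ, hc, rfl, hdis, rfl, ?_, min_le_left _ _, min_le_right _ _, H⟩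
      exact fun x hx => Finset.single_le_sum (f := fun x => |w x|) (fun _ _ => abs_nonneg _) hx)
  choose Δ w δ c h1 h2 h3 h4 h5 h6 h7 h8 h9 using hR
  refine ⟨fun n => (s n).1, fun n => (s n).2.1, fun n => (s n).2.2, Δ, w, δ, c, by simp [h0],
    by simp [h0], by simp [h0], fun n => (hP n).1, fun n => (hP n).2, h1, h2, ?_, ?_, ?_, h4, h5,
    h6, h7, h8, h9⟩
  · intro n; simp only [h3]; exact Finset.subset_union_left
  · intro n; simp only [h3]; exact Finset.subset_union_right
  · intro n x hx; simp only [h3] at hx; exact Finset.mem_union.1 hx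

/-- ramp function: zero for `t ≤ k - 1`, one for `t ≥ k` -/
noncomputable def ramp (k : ℕ) (t : ℝ) : ℝ := max 0 (min 1 (t - k + 1))

lemma ramp_cont (k : ℕ) : Continuous (ramp k) := by unfold ramp; fun_prop

lemma ramp_abs (k : ℕ) (t : ℝ) : |ramp k t| ≤ 1 := by
  unfold ramp
  rw [abs_of_nonneg (le_max_left _ _)]
  exact max_le zero_le_one (min_le_left _ _)

lemma ramp_one {k : ℕ} {t : ℝ} (h : (k : ℝ) ≤ t) : ramp k t = 1 := by
  unfold ramp
  rw [min_eq_left (by linarith), max_eq_right zero_le_one]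

lemma ramp_zero {k : ℕ} {t : ℝ} (h : t ≤ (k : ℝ) - 1) : ramp k t = 0 := by
  unfold ramp
  exact max_eq_left ((min_le_right _ _).trans (by linarith))

lemma limit_cont {X : Type*} [TopologicalSpace X] (g p : ℕ → X → ℝ) (e : ℕ → ℝ)
    (hg : ∀ k, Continuous (g k)) (hp : ∀ k, Continuous (p k)) (he : Summable e)
    (hge : ∀ k x, |g k x| ≤ e k) (H : ℕ → ℝ × X → ℝ) (hH : ∀ k, Continuous (H k))
    (hs : ∀ k z, H (k+1) z = H k z + g k z.2 + ramp k z.1 * p k z.2) :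
    ∃ G : ℝ × X → ℝ, Continuous G ∧ ∀ z, Tendsto (fun k => H k z) atTop (𝓝 (G z)) := by
  have hgc : Continuous (fun x => ∑' k, g k x) :=
    continuous_tsum hg he (fun k x => by simpa using hge k x)
  have hgs : ∀ x, Summable (fun k => g k x) := fun x =>
    Summable.of_norm_bounded he (fun k => by simpa using hge k x)
  -- local formula
  have hloc : ∀ (N : ℕ) (z : ℝ × X), z.1 ≤ (N : ℝ) - 1 → ∀ j,
      H (N + j) z = H N z + ∑ i ∈ Finset.range (N + j), g i z.2 - ∑ i ∈ Finset.range N, g i z.2 := by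
    intro N z hz j
    induction j with
    | zero => simp
    | succ j ih =>
      rw [← add_assoc, hs, ih, Finset.sum_range_succ, ramp_zero]
      · ring
      · push_cast
        have : (0 : ℝ) ≤ j := by positivity
        linarith
  have hlim : ∀ (N : ℕ) (z : ℝ × X), z.1 ≤ (N : ℝ) - 1 →
      Tendsto (fun k => H k z) atTop
        (𝓝 (H N z + (∑' k, g k z.2) - ∑ i ∈ Finset.range N, g i z.2)) := by
    intro N z hz
    have h1 : Tendsto (fun k => ∑ i ∈ Finset.range k, g i z.2) atTop (𝓝 (∑' k, g k z.2)) :=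
      (hgs z.2).hasSum.tendsto_sum_nat
    refine ((tendsto_const_nhds.add h1).sub tendsto_const_nhds).congr' ?_
    filter_upwards [eventually_ge_atTop N] with k hk
    obtain ⟨j, rfl⟩ := Nat.exists_eq_add_of_le hk
    exact (hloc N z hz j).symm
  have hex : ∀ z : ℝ × X, ∃ y, Tendsto (fun k => H k z) atTop (𝓝 y) := by
    intro z
    obtain ⟨N, hN⟩ := exists_nat_ge (z.1 + 1)
    exact ⟨_, hlim N z (by linarith)⟩
  choose G hG using hex
  refine ⟨G, ?_, hG⟩
  rw [continuous_iff_continuousAt]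
  intro z
  obtain ⟨N, hN⟩ := exists_nat_gt (z.1 + 1)
  have hc : Continuous (fun z : ℝ × X =>
      H N z + (∑' k, g k z.2) - ∑ i ∈ Finset.range N, g i z.2) :=
    ((hH N).add (hgc.comp continuous_snd)).sub
      (continuous_finsetSum _ fun i _ => (hg i).comp continuous_snd)
  refine hc.continuousAt.congr ?_
  have : ∀ᶠ y : ℝ × X in 𝓝 z, y.1 < (N : ℝ) - 1 :=
    (continuous_fst.tendsto z).eventually (gt_mem_nhds (by linarith))
  filter_upwards [this] with y hy
  exact tendsto_nhds_unique (hlim N y hy.le) (hG y)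

lemma main_construct {X : Type*} [TopologicalSpace X] (hX : Interp X) (F : Set (X → ℝ))
    (hF : Stab F) (hS : StarC F) (D : ℕ → Set (X → ℝ)) (hD : ∀ n, IsOpen (D n))
    (hd : ∀ n, Dense (D n)) (u : X → ℝ) (K0 : Finset X) (η : ℝ) (hη : 0 < η) :
    ∃ f ∈ F, (∀ x ∈ K0, |f x - u x| < η) ∧ ∃ n : ℕ → ℕ, StrictMono n ∧ ∀ k, f ∈ D (n k) := by
  classical
  have hM0 : 0 ≤ ∑ x ∈ K0, |u x| := Finset.sum_nonneg fun _ _ => abs_nonneg _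
  obtain ⟨p0, hp0, hp0b, hp0u⟩ := hX.bdd K0 u (∑ x ∈ K0, |u x|) hM0
    (fun x hx => Finset.single_le_sum (f := fun x => |u x|) (fun _ _ => abs_nonneg _) hx)
  obtain ⟨K, M, ε, Δ, w, δ, c, hK0, hM0', hε0, hM, hε, hδ, hc, hKK, hΔK, hK1, hdis, hM1, hw, hε1,
    hε2, H⟩ := exists_stages D hD hd K0 (∑ x ∈ K0, |u x|) (min 1 (η / 4)) hM0
      (lt_min one_pos (by linarith))
  have hKm : Monotone K := monotone_nat_of_le_succ hKK
  have hMm : Monotone M := monotone_nat_of_le_succ fun n => by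
    rw [hM1]; linarith [hM n, hc n]
  have hεa : Antitone ε := antitone_nat_of_succ_le fun n => by linarith [hε1 n, hε n]
  have hε_one : ∀ n, ε n ≤ 1 := fun n => (hεa (Nat.zero_le n)).trans
    (by rw [hε0]; exact min_le_left _ _)
  have hdisj : ∀ i j, i < j → Disjoint (Δ i) (Δ j) := fun i j hij =>
    (hdis j).mono_left ((hΔK i).trans (hKm hij))
  obtain ⟨n, hn, h, hhF, hh⟩ := hS Δ (fun i j hij => by
    rcases lt_or_gt_of_ne hij with h | h
    · exact hdisj i j h
    · exact (hdisj j i h).symm)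
  obtain ⟨G, hG0, hGP, hGR⟩ := dep_rec (S := ℝ × X → ℝ)
    (fun k G => Continuous G ∧ ∀ z, |G z| ≤ M (n k))
    (fun k G G' => ∃ g p : X → ℝ, Continuous g ∧ Continuous p ∧ (∀ x, |g x| ≤ ε (n k)) ∧
      (∀ x ∈ K (n k), p x = 0) ∧ (∀ z, G' z = G z + g z.2 + ramp k z.1 * p z.2) ∧
      ∀ f : X → ℝ, (∀ x ∈ K (n k + 1), |f x - G' (h x, x)| < δ (n k)) → f ∈ D (n k))
    (fun z => p0 z.2) ⟨hp0.comp continuous_snd, fun z => (hp0b z.2).trans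
      (by rw [← hM0']; exact hMm (Nat.zero_le _))⟩ (by
    rintro k G ⟨hGc, hGb⟩
    obtain ⟨v', hv1, hv2⟩ := H (n k) (fun x => G (h x, x)) (fun x _ => hGb _)
    obtain ⟨g, hg, hgb, hgv⟩ := hX.bdd (K (n k)) (fun x => v' x - G (h x, x)) (ε (n k))
      (hε _).le hv1
    obtain ⟨p, hp, hpb, hpv⟩ := hX.bdd (K (n k) ∪ Δ (n k))
      (fun x => if x ∈ K (n k) then 0 else w (n k) x - G (h x, x) - g x)
      (c (n k) + M (n k) + 1) (by linarith [hc (n k), hM (n k)]) (by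
        intro x hx
        split_ifs with hxK
        · simp only [abs_zero]; linarith [hc (n k), hM (n k)]
        · have hxΔ : x ∈ Δ (n k) := by simpa [hxK] using hx
          have a1 := abs_le.1 (hw (n k) x hxΔ)
          have a2 := abs_le.1 (hGb (h x, x))
          have a3 := abs_le.1 (hgb x)
          have a4 := hε_one (n k)
          rw [abs_le]
          constructor <;> linarith [a1.1, a1.2, a2.1, a2.2, a3.1, a3.2])
    have hp0K : ∀ x ∈ K (n k), p x = 0 := fun x hx => by
      rw [hpv x (by simp [hx])]; simp [hx]
    refine ⟨fun z => G z + g z.2 + ramp k z.1 * p z.2, ⟨?_, ?_⟩, g, p, hg, hp, hgb, hp0K,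
      fun z => rfl, ?_⟩
    · have := ramp_cont k
      fun_prop
    · intro z
      have b1 := hGb z
      have b2 := hgb z.2
      have b3 : |ramp k z.1 * p z.2| ≤ c (n k) + M (n k) + 1 := by
        rw [abs_mul]
        calc _ ≤ 1 * |p z.2| := mul_le_mul_of_nonneg_right (ramp_abs _ _) (abs_nonneg _)
          _ ≤ _ := by rw [one_mul]; exact hpb _
      have b4 := hε_one (n k)
      have b5 := abs_add_three (G z) (g z.2) (ramp k z.1 * p z.2)
      have b6 : M (n k + 1) ≤ M (n (k+1)) := hMm (hn (Nat.lt_succ_self k))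
      rw [hM1] at b6
      simp only
      linarith
    · intro f hf
      refine hv2 f (fun x hx => ?_) (fun x hx => ?_)
      · have := hf x (hKK _ hx)
        simp only [hp0K x hx, hgv x hx] at this
        convert this using 2; ring
      · have hxK : x ∉ K (n k) := fun h' => Finset.disjoint_left.1 (hdis (n k)) h' hx
        have := hf x (hΔK _ hx)
        simp only [hpv x (by simp [hx]), hxK, if_false, ramp_one (hh k x hx)] at this
        convert this using 2; ring)
  choose g p hg hp hgb hpK hGs hGD using hGR
  have hεn : ∀ k, ε (n (k+1)) ≤ ε (n k) / 2 := fun k =>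
    (hεa (hn (Nat.lt_succ_self k))).trans (hε1 _)
  have hεgeo : ∀ k, ε (n k) ≤ ε (n 0) * (1/2)^k := by
    intro k
    induction k with
    | zero => simp
    | succ k ih => rw [pow_succ]; linarith [hεn k]
  have hsum : Summable (fun k => ε (n k)) :=
    Summable.of_nonneg_of_le (fun k => (hε _).le) hεgeo
      ((summable_geometric_of_lt_one (by norm_num) (by norm_num)).mul_left _)
  obtain ⟨L, hL, hLt⟩ := limit_cont g p (fun k => ε (n k)) hg hp hsum hgb G
    (fun k => (hGP k).1) hGs
  have hclose : ∀ k x, x ∈ K (n k) → |L (h x, x) - G k (h x, x)| ≤ 2 * ε (n k) := by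
    intro k x hx
    have hj : ∀ j, |G (k + j) (h x, x) - G k (h x, x)| ≤ 2 * ε (n k) - 2 * ε (n (k+j)) := by
      intro j
      induction j with
      | zero => simp
      | succ j ih =>
        rw [← add_assoc, hGs (k+j), hpK (k+j) x (hKm (hn.monotone (Nat.le_add_right k j)) hx)]
        have e1 := hgb (k+j) x
        have e2 := hεn (k+j)
        rw [abs_le] at *
        constructor <;> simp only [mul_zero, add_zero] <;> linarith [ih.1, ih.2, e1.1, e1.2]
    have ht : Tendsto (fun j => |G (j + k) (h x, x) - G k (h x, x)|) atTop
        (𝓝 |L (h x, x) - G k (h x, x)|) :=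
      (((tendsto_add_atTop_iff_nat k).2 (hLt (h x, x))).sub tendsto_const_nhds).abs
    refine le_of_tendsto' ht fun j => ?_
    rw [add_comm j k]
    linarith [hj j, hε (n (k+j))]
  refine ⟨fun x => L (h x, x), hF.2 h hhF L hL, ?_, n, hn, fun k => ?_⟩
  · intro x hx
    have h1 := hclose 0 x (hKm (Nat.zero_le _) (by rw [hK0]; exact hx))
    simp only [hG0, hp0u x hx] at h1
    have h2 : ε (n 0) ≤ η / 4 := (hεa (Nat.zero_le _)).trans (by rw [hε0]; exact min_le_right _ _)
    simp only
    linarith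
  · refine hGD k _ fun x hx => ?_
    have h1 := hclose (k+1) x (hKm (hn (Nat.lt_succ_self k)) hx)
    have h2 : ε (n (k+1)) ≤ δ (n k) / 4 := (hεa (hn (Nat.lt_succ_self k))).trans (hε2 _)
    have := hδ (n k)
    linarith

lemma baire_of_star {X : Type*} [TopologicalSpace X] (hX : Interp X) (F : Set (X → ℝ))
    (hF : Stab F) (hS : StarC F) : BaireSpace F := by
  constructor
  intro U hUo hUd
  choose D hD hDU using fun n => isOpen_induced_iff.1 (hUo n)
  have hDd : ∀ n, Dense (D n) := fun n => dense_of_stab hX hF (by rw [hDU]; exact hUd n)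
  let E : ℕ → Set (X → ℝ) := fun n => ⋂ i ∈ Finset.range (n+1), D i
  have hE : ∀ n, IsOpen (E n) ∧ Dense (E n) := by
    intro n
    induction n with
    | zero => simpa [E] using ⟨hD 0, hDd 0⟩
    | succ n ih =>
      have : E (n+1) = D (n+1) ∩ E n := by
        simp only [E]
        rw [Finset.range_add_one, Finset.set_biInter_insert]
      rw [this]
      exact ⟨(hD _).inter ih.1, (hDd _).inter_of_isOpen_left ih.2 (hD _)⟩
  rw [dense_iff_inter_open]
  rintro V hV ⟨u, hu⟩
  obtain ⟨V', hV', rfl⟩ := isOpen_induced_iff.1 hV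
  obtain ⟨T, η, hη, hT⟩ := box_of_open hV' hu
  obtain ⟨f, hfF, hfu, n, hn, hfn⟩ := main_construct hX F hF hS E (fun n => (hE n).1)
    (fun n => (hE n).2) u.1 T η hη
  refine ⟨⟨f, hfF⟩, hT f hfu, ?_⟩
  rw [Set.mem_iInter]
  intro i
  rw [← hDU i]
  have := hfn i
  simp only [E, Set.mem_iInter, Finset.mem_range] at this
  exact this i (Nat.lt_succ_of_le hn.le_apply)

/-- the product of function spaces as a function space on the disjoint sum -/
def sigmaHomeo {A : Type*} (X : A → Type*) (F : ∀ b, Set (X b → ℝ)) :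
    {f : (Σ b, X b) → ℝ | ∀ b, (fun x => f ⟨b, x⟩) ∈ F b} ≃ₜ (∀ b, F b) where
  toFun f b := ⟨fun x => f.1 ⟨b, x⟩, f.2 b⟩
  invFun f := ⟨fun z => (f z.1).1 z.2, fun b => (f b).2⟩
  left_inv f := rfl
  right_inv f := rfl
  continuous_toFun := by
    refine continuous_pi fun b => Continuous.subtype_mk (continuous_pi fun x => ?_) _
    exact (continuous_apply (⟨b, x⟩ : Σ b, X b)).comp continuous_subtype_val
  continuous_invFun := by
    refine Continuous.subtype_mk (continuous_pi fun z => ?_) _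
    exact (continuous_apply z.2).comp (continuous_subtype_val.comp (continuous_apply z.1))

theorem statement4 {A : Type*} (X : A → Type*) [∀ b, TopologicalSpace (X b)]
    [∀ b, T35Space (X b)] (α : Ordinal.{0}) (hα : α ≤ ω_ 1)
    (h : ∀ b : A, BaireSpace ↥(BaireFun (X b) ℝ α)) :
    BaireSpace (∀ b : A, ↥(BaireFun (X b) ℝ α)) := by
  have hst : ∀ b, Stab (BaireFun (X b) ℝ α) := fun b => stab_baireFun (X b) α
  have hin : ∀ b, Interp (X b) := fun b => interp_of_t35 (X b)
  haveI := baire_of_star (interp_sigma X hin) _ (stab_sigma X (fun b => BaireFun (X b) ℝ α) hst)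
    (star_sigma X (fun b => BaireFun (X b) ℝ α) hst
      (fun b => star_of_baire (hin b) _ (hst b) (hB := h b)))
  exact (sigmaHomeo X (fun b => BaireFun (X b) ℝ α)).baireSpace
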